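/- arXiv:2508.05980 — 3 statements merged into one kernel-verified Lean document; each statement's English description precedes it below -/
import Mathlib

section
/- Let s ≥ 2 and 2 ≤ r' ≤ s' be integers with s' − r' < 2(s − 1), and let F : U → ℂ^{r'×s'} be a local orthogonal map in chart form from 𝒢(1,s) to 𝒢(r',s'). Assume F is non-null, i.e. there exists z₁ ∈ U with F(z₁)·F(z₁)ᴴ ≠ I_{r'}. Then there exists a ℂ-linear subspace N ⊆ ℂ^{r'+s'} of dimension r' − 1 which is totally isotropic for ⟨·,·⟩_{r',s'} (i.e. ⟨u,v⟩_{r',s'} = 0 for all u, v ∈ N) and which satisfies N ⊆ rowSpan([I_{r'} | F(z)]) for every z ∈ U. -/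
open scoped BigOperators
open Matrix

noncomputable section

/-- Hermitian dot product of row vectors: `z ⬝ wᴴ`. -/
def cdot {n : ℕ} (z w : Fin n → ℂ) : ℂ := ∑ i, z i * (starRingEnd ℂ) (w i)

/-- The indefinite Hermitian inner product of signature `(a,b)` on `ℂ^{a+b}`. -/
def iip (a b : ℕ) (z w : Fin (a + b) → ℂ) : ℂ :=
  ∑ i : Fin (a + b), (if (i : ℕ) < a then (1 : ℂ) else -1) * z i * (starRingEnd ℂ) (w i)

/-- Row span of a matrix: the ℂ-linear span of its rows. -/
def rowSpan {m n : ℕ} (A : Matrix (Fin m) (Fin n) ℂ) : Submodule ℂ (Fin n → ℂ) :=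
  Submodule.span ℂ (Set.range fun i => A i)

/-- The chart matrix `[I_r | Z]`. -/
def chartMat (r s : ℕ) (Z : Matrix (Fin r) (Fin s) ℂ) : Matrix (Fin r) (Fin (r + s)) ℂ :=
  Matrix.of fun i j =>
    if h : (j : ℕ) < r then (if (i : ℕ) = (j : ℕ) then 1 else 0)
    else Z i ⟨(j : ℕ) - r, by have := j.isLt; omega⟩


open MeasureTheory in
theorem aux_dir {E V : Type*} [NormedAddCommGroup E] [NormedSpace ℂ E] [FiniteDimensional ℂ E]
    [NormedAddCommGroup V] [NormedSpace ℂ V] [FiniteDimensional ℂ V]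
    {U : Set E} (hU : IsOpen U) {f : E → V} (hf : DifferentiableOn ℂ f U) (v : E)
    {x : E} (hx : x ∈ U) : DifferentiableAt ℂ (fun z => fderiv ℂ f z v) x := by
  have : CompleteSpace V := FiniteDimensional.complete ℂ V
  have : CompleteSpace E := FiniteDimensional.complete ℂ E
  have : ProperSpace E := FiniteDimensional.proper ℂ E
  have : ProperSpace V := FiniteDimensional.proper ℂ V
  let _ : MeasurableSpace E := borel E
  have : BorelSpace E := ⟨rfl⟩
  let _ : NormedSpace ℝ V := NormedSpace.restrictScalars ℝ ℂ V
  have hcont : ContinuousAt f x := (hf.differentiableAt (hU.mem_nhds hx)).continuousAt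
  obtain ⟨δ, hδ, hδU, hδ1⟩ : ∃ δ > 0, (∀ y ∈ Metric.ball x (3*δ), y ∈ U) ∧
      ∀ y ∈ Metric.ball x (3*δ), dist (f y) (f x) ≤ 1 := by
    have h1 : ∀ᶠ y in nhds x, y ∈ U ∧ dist (f y) (f x) < 1 :=
      Filter.Eventually.and (hU.mem_nhds hx) (hcont (Metric.ball_mem_nhds _ one_pos))
    obtain ⟨ε, hε, h⟩ := Metric.mem_nhds_iff.1 h1
    refine ⟨ε/3, by positivity, fun y hy => ?_, fun y hy => ?_⟩
    · exact (h (by convert hy using 1; congr 1; ring)).1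
    · exact (h (by convert hy using 1; congr 1; ring)).2.le
  have hbd : ∀ y ∈ Metric.ball x (2*δ), ‖fderiv ℂ f y‖ ≤ 2 / δ := by
    intro y hy
    have hsub : Metric.ball y δ ⊆ Metric.ball x (3*δ) := by
      apply Metric.ball_subset_ball'
      have := Metric.mem_ball.1 hy
      linarith
    apply Complex.norm_fderiv_le_div_of_mapsTo_ball (R₁ := δ) (R₂ := 2) _ _ hδ
    · exact hf.mono (fun w hw => hδU w (hsub hw))
    · intro w hw
      have h1 := hδ1 w (hsub hw)
      have h2 := hδ1 y (hsub (Metric.mem_ball_self hδ))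
      rw [Metric.mem_closedBall]
      have := dist_triangle_right (f w) (f y) (f x)
      linarith
  set ρ : ℝ := δ / (‖v‖ + 1) with hρ
  have hρ0 : 0 < ρ := by positivity
  have hρv : ρ * ‖v‖ < δ := by
    rw [hρ, div_mul_eq_mul_div, div_lt_iff₀ (by positivity)]
    nlinarith
  have hmem : ∀ z ∈ Metric.ball x δ, ∀ ζ : ℂ, ‖ζ‖ ≤ ρ → z + ζ • v ∈ Metric.ball x (2*δ) := by
    intro z hz ζ hζ
    rw [mem_ball_iff_norm] at hz ⊢
    have h1 : ‖ζ • v‖ ≤ ρ * ‖v‖ := by rw [norm_smul]; gcongr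
    have : z + ζ • v - x = (z - x) + ζ • v := by abel
    rw [this]
    have := norm_add_le (z - x) (ζ • v)
    linarith
  have h23 : Metric.ball x (2*δ) ⊆ U := fun y hy =>
    hδU y (Metric.ball_subset_ball (by linarith) hy)
  have hda : ∀ y ∈ Metric.ball x (2*δ), HasFDerivAt f (fderiv ℂ f y) y := fun y hy =>
    (hf.differentiableAt (hU.mem_nhds (h23 hy))).hasFDerivAt
  let k : ℝ → ℂ := fun θ => deriv (circleMap 0 ρ) θ * ((circleMap 0 ρ θ - 0)^2)⁻¹
  have hk : Continuous k := by
    have h0 : ∀ θ, (circleMap 0 ρ θ - 0)^2 ≠ 0 := by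
      intro θ
      simp [hρ0.ne']
    simp only [k, deriv_circleMap]
    exact ((continuous_circleMap 0 ρ).mul continuous_const).mul
      ((((continuous_circleMap 0 ρ).sub continuous_const).pow 2).inv₀ h0)
  have hkn : ∀ θ, ‖k θ‖ ≤ 1/ρ := by
    intro θ
    simp [k, deriv_circleMap, abs_of_pos hρ0]
    apply le_of_eq
    field_simp
  have hcm : ∀ θ, ‖circleMap 0 ρ θ‖ ≤ ρ := fun θ => by simp [abs_of_pos hρ0]
  have hrep : ∀ z ∈ Metric.ball x δ, fderiv ℂ f z v =
      (2 * Real.pi * Complex.I : ℂ)⁻¹ •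
        ∫ θ in Set.Ioc 0 (2*Real.pi), k θ • f (z + circleMap 0 ρ θ • v) := by
    intro z hz
    have hopen : IsOpen ((fun ζ : ℂ => z + ζ • v) ⁻¹' Metric.ball x (2*δ)) :=
      Metric.isOpen_ball.preimage (by fun_prop)
    have h0 : z ∈ Metric.ball x (2*δ) := Metric.ball_subset_ball (by linarith) hz
    have := Complex.two_pi_I_inv_smul_circleIntegral_sub_sq_inv_smul_of_differentiable
      hopen (c := 0) (w₀ := 0) (R := ρ) (f := fun ζ => f (z + ζ • v))
      (by intro ζ hζ; exact hmem z hz ζ (by simpa using hζ))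
      (by
        intro ζ hζ
        have h1 := (hda _ hζ).differentiableAt
        exact (DifferentiableAt.comp (g := f) (f := fun ζ : ℂ => z + ζ • v) ζ h1
          (by fun_prop)).differentiableWithinAt)
      (Metric.mem_ball_self hρ0)
    have hd : deriv (fun ζ : ℂ => f (z + ζ • v)) 0 = fderiv ℂ f z v := by
      have h2 : HasDerivAt (fun ζ : ℂ => z + ζ • v) v 0 := by
        simpa using ((hasDerivAt_id (0:ℂ)).smul_const v).const_add z
      have h3 := HasFDerivAt.comp_hasDerivAt (0:ℂ) (l := f) (f := fun ζ : ℂ => z + ζ • v)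
        (l' := fderiv ℂ f z) (by simpa using hda z h0) h2
      exact h3.deriv
    rw [hd] at this
    rw [← this, circleIntegral, intervalIntegral.integral_of_le (by positivity)]
    simp only [k, smul_smul]
  have hInt : HasFDerivAt (fun z => ∫ θ in Set.Ioc 0 (2*Real.pi), k θ • f (z + circleMap 0 ρ θ • v))
      (∫ θ in Set.Ioc 0 (2*Real.pi), k θ • fderiv ℂ f (x + circleMap 0 ρ θ • v)) x := by
    have hcontF : ∀ z ∈ Metric.ball x δ, Continuous (fun θ => k θ • f (z + circleMap 0 ρ θ • v)) := by
      intro z hz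
      refine hk.smul ?_
      rw [continuous_iff_continuousAt]
      intro θ
      have h1 := (hda _ (hmem z hz _ (hcm θ))).continuousAt
      exact ContinuousAt.comp (g := f) (f := fun θ => z + circleMap 0 ρ θ • v) h1
        (by fun_prop)
    apply hasFDerivAt_integral_of_dominated_of_fderiv_le (𝕜 := ℂ)
      (F' := fun z θ => k θ • fderiv ℂ f (z + circleMap 0 ρ θ • v))
      (bound := fun _ => 1/ρ * (2/δ)) (Metric.ball_mem_nhds x hδ)
    · filter_upwards [Metric.ball_mem_nhds x hδ] with z hz
      exact (hcontF z hz).aestronglyMeasurable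
    · exact (hcontF x (Metric.mem_ball_self hδ)).integrableOn_Ioc
    · apply Measurable.aestronglyMeasurable
      apply Measurable.smul hk.measurable
      exact (measurable_fderiv ℂ f).comp (by fun_prop : Continuous _).measurable
    · refine Filter.Eventually.of_forall fun θ z hz => ?_
      rw [norm_smul]
      gcongr
      · exact hkn θ
      · exact hbd _ (hmem z hz _ (hcm θ))
    · exact integrable_const _
    · refine Filter.Eventually.of_forall fun θ z hz => ?_
      have h1 := hda _ (hmem z hz _ (hcm θ))
      have h2 : HasFDerivAt (fun z : E => z + circleMap 0 ρ θ • v) (ContinuousLinearMap.id ℂ E) z :=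
        (hasFDerivAt_id z).add_const _
      exact (h1.comp z h2).const_smul (k θ)
  have h := (hInt.const_smul ((2 * Real.pi * Complex.I : ℂ)⁻¹)).differentiableAt
  refine h.congr_of_eventuallyEq ?_
  filter_upwards [Metric.ball_mem_nhds x hδ] with z hz
  exact hrep z hz

theorem aux_fderiv {E V : Type*} [NormedAddCommGroup E] [NormedSpace ℂ E] [FiniteDimensional ℂ E]
    [NormedAddCommGroup V] [NormedSpace ℂ V] [FiniteDimensional ℂ V]
    {U : Set E} (hU : IsOpen U) {f : E → V} (hf : DifferentiableOn ℂ f U) :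
    DifferentiableOn ℂ (fderiv ℂ f) U := by
  intro x hx
  apply DifferentiableAt.differentiableWithinAt
  let d := Module.finrank ℂ E
  have hd : d = Module.finrank ℂ (Fin d → ℂ) := (Module.finrank_fin_fun ℂ).symm
  let e₁ := ContinuousLinearEquiv.ofFinrankEq hd
  let e₂ := (e₁.arrowCongr (1 : V ≃L[ℂ] V)).trans (ContinuousLinearEquiv.piRing (Fin d))
  have h : DifferentiableAt ℂ (fun z => e₂ (fderiv ℂ f z)) x :=
    differentiableAt_pi.mpr fun i => aux_dir hU hf _ hx
  have h2 := e₂.symm.differentiableAt.comp x h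
  simpa [Function.comp_def] using h2


theorem cdot_add_left {n : ℕ} (a b c : Fin n → ℂ) : cdot (a + b) c = cdot a c + cdot b c := by
  simp [cdot, add_mul, Finset.sum_add_distrib]
theorem cdot_add_right {n : ℕ} (a b c : Fin n → ℂ) : cdot a (b + c) = cdot a b + cdot a c := by
  simp [cdot, mul_add, Finset.sum_add_distrib]
theorem cdot_smul_left {n : ℕ} (t : ℂ) (a b : Fin n → ℂ) : cdot (t • a) b = t * cdot a b := by
  simp [cdot, Finset.mul_sum, mul_assoc]
theorem cdot_smul_right {n : ℕ} (t : ℂ) (a b : Fin n → ℂ) :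
    cdot a (t • b) = (starRingEnd ℂ) t * cdot a b := by
  simp only [cdot, Finset.mul_sum, Pi.smul_apply, smul_eq_mul, map_mul]
  exact Finset.sum_congr rfl fun i _ => by ring
theorem cdot_conj {n : ℕ} (a b : Fin n → ℂ) : (starRingEnd ℂ) (cdot a b) = cdot b a := by
  simp [cdot, mul_comm]

def nsq {n : ℕ} (a : Fin n → ℂ) : ℝ := ∑ i, ‖a i‖ ^ 2

theorem cdot_self {n : ℕ} (a : Fin n → ℂ) : cdot a a = (nsq a : ℂ) := by
  simp [cdot, nsq, Complex.mul_conj, Complex.normSq_eq_norm_sq]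
theorem nsq_nonneg {n : ℕ} (a : Fin n → ℂ) : 0 ≤ nsq a :=
  Finset.sum_nonneg fun i _ => by positivity
theorem norm_sq_le_nsq {n : ℕ} (a : Fin n → ℂ) : ‖a‖ ^ 2 ≤ nsq a := by
  have h : ‖a‖ ≤ Real.sqrt (nsq a) := by
    rw [pi_norm_le_iff_of_nonneg (Real.sqrt_nonneg _)]
    intro i
    apply Real.le_sqrt_of_sq_le
    exact Finset.single_le_sum (f := fun i => ‖a i‖ ^ 2) (fun i _ => by positivity)
      (Finset.mem_univ i)
  calc ‖a‖^2 ≤ Real.sqrt (nsq a) ^ 2 := by gcongr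
    _ = nsq a := Real.sq_sqrt (nsq_nonneg a)
theorem nsq_eq_zero {n : ℕ} {a : Fin n → ℂ} (h : nsq a = 0) : a = 0 := by
  have := norm_sq_le_nsq a
  rw [h] at this
  have : ‖a‖ = 0 := by nlinarith [norm_nonneg a]
  simpa using this
theorem cdot_self_eq_zero {n : ℕ} {a : Fin n → ℂ} (h : cdot a a = 0) : a = 0 := by
  rw [cdot_self] at h
  exact nsq_eq_zero (by exact_mod_cast h)
theorem nsq_pos {n : ℕ} {a : Fin n → ℂ} (h : a ≠ 0) : 0 < nsq a :=
  lt_of_le_of_ne (nsq_nonneg a) fun h' => h (nsq_eq_zero h'.symm)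
theorem cdot_swap_zero {n : ℕ} {a b : Fin n → ℂ} (h : cdot a b = 0) : cdot b a = 0 := by
  rw [← cdot_conj, h, map_zero]

/-- The functional `u ↦ u · zᴴ`. -/
def phi {n : ℕ} (z : Fin n → ℂ) : (Fin n → ℂ) →ₗ[ℂ] ℂ where
  toFun u := cdot u z
  map_add' a b := cdot_add_left a b z
  map_smul' t a := by simp [cdot_smul_left]

theorem finrank_ker_phi {n : ℕ} (z : Fin n → ℂ) : n ≤ Module.finrank ℂ (LinearMap.ker (phi z)) + 1 := by
  have h := LinearMap.finrank_range_add_finrank_ker (phi z)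
  have h2 : Module.finrank ℂ (LinearMap.range (phi z)) ≤ 1 := by
    simpa using Submodule.finrank_le (LinearMap.range (phi z))
  simp at h
  omega

theorem exists_perp {n : ℕ} (hn : 2 ≤ n) (z : Fin n → ℂ) : ∃ e : Fin n → ℂ, e ≠ 0 ∧ cdot e z = 0 := by
  have h := finrank_ker_phi z
  have : Nontrivial (LinearMap.ker (phi z)) := by
    apply Module.nontrivial_of_finrank_pos (R := ℂ)
    omega
  obtain ⟨⟨e, he⟩, hne⟩ := exists_ne (0 : LinearMap.ker (phi z))
  exact ⟨e, fun h => hne (Subtype.ext h), he⟩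

theorem disc_zero {V : Type*} [NormedAddCommGroup V] [NormedSpace ℂ V] {W : Set ℂ} {g : ℂ → V}
    (hg : DifferentiableOn ℂ g W) (hW : Metric.closedBall 0 1 ⊆ W)
    (h0 : ∀ ω : ℂ, ‖ω‖ = 1 → g ω = 0) : g 0 = 0 := by
  have h := Complex.eqOn_of_eqOn_frontier (f := g) (g := fun _ => (0 : V))
    (U := Metric.ball (0:ℂ) 1) Metric.isBounded_ball
    (hg.diffContOnCl_ball hW) diffContOnCl_const (by
      intro ω hω
      rw [frontier_ball _ one_ne_zero] at hω
      exact h0 ω (by simpa using hω))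
  exact h (Metric.mem_ball_self one_pos)

theorem nsq_continuous {n : ℕ} : Continuous (nsq : (Fin n → ℂ) → ℝ) := by
  unfold nsq; fun_prop

/-- `|x + ω e|² = |x|² + |e|²` for `e ⊥ x`, `|ω| = 1`. -/
theorem cdot_line {n : ℕ} (x e : Fin n → ℂ) (hxe : cdot e x = 0) (ω : ℂ) (hω : ‖ω‖ = 1) :
    cdot (x + ω • e) (x + ω • e) = cdot x x + cdot e e := by
  have h2 := cdot_swap_zero hxe
  have h3 : ω * (starRingEnd ℂ) ω = 1 := by
    rw [Complex.mul_conj, Complex.normSq_eq_norm_sq, hω]; simp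
  simp only [cdot_add_left, cdot_add_right, cdot_smul_left, cdot_smul_right, hxe, h2]
  linear_combination (cdot e e) * h3

theorem sphere_open {n : ℕ} (hn : 2 ≤ n) {V : Type*} [NormedAddCommGroup V] [NormedSpace ℂ V]
    {U : Set (Fin n → ℂ)} (hU : IsOpen U)
    {h : (Fin n → ℂ) → V} (hh : DifferentiableOn ℂ h U) {z₀ : Fin n → ℂ} (hz₀ : z₀ ∈ U)
    (hnull : cdot z₀ z₀ = 1) (hz : ∀ z ∈ U, cdot z z = 1 → h z = 0) :
    ∃ W : Set (Fin n → ℂ), IsOpen W ∧ W.Nonempty ∧ W ⊆ U ∧ ∀ z ∈ W, h z = 0 := by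
  obtain ⟨ε, hε, hεU⟩ := Metric.isOpen_iff.1 hU z₀ hz₀
  have hn0 : nsq z₀ = 1 := by rw [cdot_self] at hnull; exact_mod_cast hnull
  set δ := ε / 2 with hδ
  have hδ0 : 0 < δ := by positivity
  refine ⟨Metric.ball z₀ δ ∩ {x | 1 - δ^2 < nsq x ∧ nsq x < 1}, ?_, ?_, ?_, ?_⟩
  · exact Metric.isOpen_ball.inter
      ((isOpen_lt continuous_const nsq_continuous).inter (isOpen_lt nsq_continuous continuous_const))
  · have hc : Continuous (fun c : ℝ => (c : ℂ) • z₀) := by fun_prop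
    have hT : Filter.Tendsto (fun c : ℝ => (c : ℂ) • z₀) (nhdsWithin 1 (Set.Iio 1)) (nhds z₀) := by
      have := hc.tendsto 1
      simp only [Complex.ofReal_one, one_smul] at this
      exact this.mono_left nhdsWithin_le_nhds
    have h1 := hT.eventually (Metric.ball_mem_nhds z₀ hδ0)
    have h2 : ∀ᶠ c : ℝ in nhdsWithin (1:ℝ) (Set.Iio 1), 1 - δ^2 < nsq ((c:ℂ) • z₀) := by
      have := (nsq_continuous.tendsto z₀).comp hT
      apply this.eventually_const_lt
      rw [hn0]; nlinarith
    have h3 : ∀ᶠ c in nhdsWithin (1:ℝ) (Set.Iio 1), (0:ℝ) < c :=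
      nhdsWithin_le_nhds (lt_mem_nhds one_pos)
    obtain ⟨c, hc1, hc2, hc3, hc4⟩ :=
      (h1.and (h2.and (h3.and (self_mem_nhdsWithin (a := (1:ℝ)))))).exists
    refine ⟨(c:ℂ) • z₀, hc1, hc2, ?_⟩
    have : nsq ((c:ℂ) • z₀) = c^2 * nsq z₀ := by
      simp [nsq, Finset.mul_sum, mul_pow]
    rw [this, hn0]
    have : c < 1 := hc4
    nlinarith
  · intro x hx
    exact hεU (Metric.ball_subset_ball (by rw [hδ]; linarith) hx.1)
  · rintro x ⟨hx1, hx2, hx3⟩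
    obtain ⟨e₀, he₀, hp⟩ := exists_perp hn x
    have hpos := nsq_pos he₀
    set t : ℝ := Real.sqrt ((1 - nsq x) / nsq e₀) with ht
    have ht2 : t^2 = (1 - nsq x) / nsq e₀ := Real.sq_sqrt (div_nonneg (by linarith) hpos.le)
    set e : Fin n → ℂ := (t:ℂ) • e₀ with he
    have hee : nsq e = 1 - nsq x := by
      have : nsq e = t^2 * nsq e₀ := by
        simp [he, nsq, Finset.mul_sum, mul_pow]
      rw [this, ht2]; field_simp
    have hep : cdot e x = 0 := by rw [he, cdot_smul_left, hp, mul_zero]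
    have hen : ‖e‖ < δ := by
      have := norm_sq_le_nsq e
      nlinarith [norm_nonneg e]
    have hmem : ∀ ω : ℂ, ‖ω‖ ≤ 1 → x + ω • e ∈ U := by
      intro ω hω
      apply hεU
      rw [mem_ball_iff_norm] at hx1 ⊢
      have e1 : x + ω • e - z₀ = (x - z₀) + ω • e := by abel
      have e2 : ‖ω • e‖ ≤ ‖e‖ := by
        rw [norm_smul]; nlinarith [norm_nonneg e]
      rw [e1]
      have := norm_add_le (x - z₀) (ω • e)
      rw [hδ] at *
      linarith
    have := disc_zero (g := fun ω : ℂ => h (x + ω • e)) (W := (fun ω : ℂ => x + ω • e) ⁻¹' U)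
      (hh.comp (Differentiable.differentiableOn (by fun_prop)) (Set.mapsTo_preimage _ _))
      (fun ω hω => hmem ω (by simpa using hω))
      (fun ω hω => hz _ (hmem ω hω.le) (by
        rw [cdot_line x e hep ω hω, cdot_self, cdot_self, hee]; push_cast; ring))
    simpa using this

theorem identity_multi {E V : Type*} [NormedAddCommGroup E] [NormedSpace ℂ E]
    [NormedAddCommGroup V] [NormedSpace ℂ V] [CompleteSpace V]
    {U : Set E} (hU : IsOpen U) (hc : IsPreconnected U)
    {h : E → V} (hh : DifferentiableOn ℂ h U) {W : Set E} (hW : IsOpen W) (hne : W.Nonempty)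
    (hWU : W ⊆ U) (hz : ∀ z ∈ W, h z = 0) : ∀ z ∈ U, h z = 0 := by
  let S : Set E := {x | ∀ᶠ y in nhds x, h y = 0}
  have hSo : IsOpen S := isOpen_setOfPred_eventually_nhds
  have key : ∀ x ∈ U, x ∈ closure S → x ∈ S := by
    intro x hx hxS
    obtain ⟨ε, hε, hεU⟩ := Metric.isOpen_iff.1 hU x hx
    obtain ⟨y, hyS, hyd⟩ := Metric.mem_closure_iff.1 hxS ε hε
    have hyb : y ∈ Metric.ball x ε := by rwa [Metric.mem_ball, dist_comm]
    filter_upwards [Metric.ball_mem_nhds x hε] with w hw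
    let L : ℂ → E := fun t => y + t • (w - y)
    have hL : Continuous L := by fun_prop
    let O : Set ℂ := L ⁻¹' Metric.ball x ε
    have hO : IsOpen O := Metric.isOpen_ball.preimage hL
    have hOc : Convex ℝ O := by
      let _ : NormedSpace ℝ E := NormedSpace.restrictScalars ℝ ℂ E
      intro a ha b hb p q hp hq hpq
      have := convex_ball x ε ha hb hp hq hpq
      have e : L (p • a + q • b) = p • L a + q • L b := by
        have hq' : (q:ℂ) = 1 - p := by rw [← Complex.ofReal_one, ← hpq]; push_cast; ring
        have r1 : ∀ (r:ℝ) (v:E), r • v = (r:ℂ) • v := fun r v => rfl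
        simp only [L, r1, hq', Complex.real_smul]
        module
      change L (p • a + q • b) ∈ Metric.ball x ε
      rw [e]; exact this
    have hd : DifferentiableOn ℂ (fun t => h (L t)) O :=
      hh.comp (Differentiable.differentiableOn (by fun_prop)) (fun t ht => hεU ht)
    have h0 : (0:ℂ) ∈ O := by simpa [O, L] using hyb
    have h1 : (1:ℂ) ∈ O := by simpa [O, L] using hw
    have hev : (fun t => h (L t)) =ᶠ[nhds 0] 0 := by
      have : Filter.Tendsto L (nhds 0) (nhds y) := by
        have := hL.tendsto 0
        simpa [L] using this
      exact this.eventually hyS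
    have := (hd.analyticOnNhd hO).eqOn_zero_of_preconnected_of_eventuallyEq_zero
      hOc.isPreconnected h0 hev h1
    simpa [L] using this
  have hsub : U ⊆ S := by
    apply hc.subset_of_closure_inter_subset hSo
    · obtain ⟨w, hw⟩ := hne
      exact ⟨w, hWU hw, Filter.mem_of_superset (hW.mem_nhds hw) hz⟩
    · rintro x ⟨h1, h2⟩; exact key x h2 h1
  intro z hzU
  exact (hsub hzU).self_of_nhds

theorem sphere_zero {n : ℕ} (hn : 2 ≤ n) {V : Type*} [NormedAddCommGroup V] [NormedSpace ℂ V]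
    [CompleteSpace V]
    {U : Set (Fin n → ℂ)} (hU : IsOpen U) (hc : IsPreconnected U)
    {h : (Fin n → ℂ) → V} (hh : DifferentiableOn ℂ h U)
    (hnull : ∃ z₀ ∈ U, cdot z₀ z₀ = 1) (hz : ∀ z ∈ U, cdot z z = 1 → h z = 0) :
    ∀ z ∈ U, h z = 0 := by
  obtain ⟨z₀, h1, h2⟩ := hnull
  obtain ⟨W, a, b, c, d⟩ := sphere_open hn hU hh h1 h2 hz
  exact identity_multi hU hc hh a b c d

theorem tangential_zero {n : ℕ} (hn : 2 ≤ n) {U : Set (Fin n → ℂ)} (hU : IsOpen U)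
    {p : (Fin n → ℂ) × (Fin n → ℂ) → ℂ} (hp : DifferentiableOn ℂ p (U ×ˢ Set.univ))
    (hhom : ∀ z u (t : ℂ), p (z, u) = 0 → p (z, t • u) = 0)
    (ht : ∀ z ∈ U, cdot z z = 1 → ∀ u, cdot u z = 0 → p (z, u) = 0)
    {z : Fin n → ℂ} (hz : z ∈ U) (hnull : cdot z z = 1) : p (z, z) = 0 := by
  obtain ⟨e, he, hez⟩ := exists_perp hn z
  have hnp := nsq_pos he
  set N := nsq e with hN
  let c : ℝ → ℝ := fun d => Real.sqrt (1 - d^2 * N)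
  have hcc : Continuous c := by fun_prop
  have hc0 : c 0 = 1 := by simp [c]
  obtain ⟨ε, hε, hεU⟩ := Metric.isOpen_iff.1 hU z hz
  have hev : ∀ᶠ d in nhdsWithin (0:ℝ) (Set.Ioi 0), p ((c d : ℂ) • z, z) = 0 := by
    have h1 : ∀ᶠ d in nhds (0:ℝ), |c d - 1| * ‖z‖ + |d| * ‖e‖ < ε := by
      have : Continuous (fun d => |c d - 1| * ‖z‖ + |d| * ‖e‖) := by fun_prop
      apply (this.tendsto 0).eventually_lt_const
      simpa [hc0] using hε
    have h2 : ∀ᶠ d in nhds (0:ℝ), 0 < 1 - d^2 * N := by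
      have : Continuous (fun d : ℝ => 1 - d^2 * N) := by fun_prop
      apply (this.tendsto 0).eventually_const_lt
      simp
    filter_upwards [nhdsWithin_le_nhds h1, nhdsWithin_le_nhds h2, self_mem_nhdsWithin]
      with d hd1 hd2 hd3
    have hd0 : (0:ℝ) < d := hd3
    have hc2 : (c d)^2 = 1 - d^2 * N := Real.sq_sqrt hd2.le
    have hc2' : (c d : ℂ)^2 = 1 - (d:ℂ)^2 * N := by exact_mod_cast hc2
    have hmem : ∀ ω : ℂ, ‖ω‖ ≤ 1 → (c d : ℂ) • z + ω • ((d:ℂ) • e) ∈ U := by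
      intro ω hω
      apply hεU
      rw [mem_ball_iff_norm]
      have e1 : (c d : ℂ) • z + ω • ((d:ℂ) • e) - z = ((c d - 1 : ℝ):ℂ) • z + ω • ((d:ℂ) • e) := by
        push_cast; module
      rw [e1]
      refine lt_of_le_of_lt (norm_add_le _ _) (lt_of_le_of_lt ?_ hd1)
      rw [norm_smul, norm_smul, norm_smul, Complex.norm_real, Complex.norm_real, Real.norm_eq_abs,
        Real.norm_eq_abs]
      have : 0 ≤ |d| * ‖e‖ := by positivity
      nlinarith
    have key := disc_zero
      (g := fun ω : ℂ => p ((c d : ℂ) • z + ω • ((d:ℂ) • e), ((d * N : ℝ):ℂ) • z - ω • ((c d : ℂ) • e)))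
      (W := (fun ω : ℂ => (c d : ℂ) • z + ω • ((d:ℂ) • e)) ⁻¹' U)
      (hp.comp (f := fun ω : ℂ => ((c d : ℂ) • z + ω • ((d:ℂ) • e),
          ((d * N : ℝ):ℂ) • z - ω • ((c d : ℂ) • e)))
        (Differentiable.differentiableOn (by fun_prop)) (fun ω hω => ⟨hω, trivial⟩))
      (fun ω hω => hmem ω (by simpa using hω))
      (fun ω hω => ht _ (hmem ω hω.le) (by
          rw [cdot_line _ _ _ ω hω]
          · simp only [cdot_smul_left, cdot_smul_right, hnull, cdot_self e, Complex.conj_ofReal,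
              ← hN]
            linear_combination hc2'
          · simp only [cdot_smul_left, cdot_smul_right, hez, mul_zero]) _ (by
          have h3 : ω * (starRingEnd ℂ) ω = 1 := by
            rw [Complex.mul_conj, Complex.normSq_eq_norm_sq, hω]; simp
          have h4 := cdot_swap_zero hez
          rw [sub_eq_add_neg, ← neg_smul]
          simp only [cdot_add_left, cdot_add_right, cdot_smul_left, cdot_smul_right, hnull,
            cdot_self e, Complex.conj_ofReal, hez, h4, ← hN]
          push_cast
          linear_combination (-(c d : ℂ) * d * N) * h3))
    simp only [zero_smul, add_zero, sub_zero] at key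
    have h5 := hhom _ _ (((d * N : ℝ):ℂ)⁻¹) key
    rw [smul_smul, inv_mul_cancel₀, one_smul] at h5
    · exact h5
    · exact_mod_cast (mul_pos hd0 hnp).ne'
  have hcont : ContinuousAt p (z, z) :=
    (hp.differentiableAt ((hU.prod isOpen_univ).mem_nhds ⟨hz, trivial⟩)).continuousAt
  have hT : Filter.Tendsto (fun d : ℝ => p ((c d : ℂ) • z, z)) (nhdsWithin 0 (Set.Ioi 0))
      (nhds (p (z, z))) := by
    apply Filter.Tendsto.mono_left _ nhdsWithin_le_nhds
    apply hcont.tendsto.comp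
    have : Continuous (fun d : ℝ => ((c d : ℂ) • z, z)) := by fun_prop
    simpa [hc0] using this.tendsto 0
  exact tendsto_nhds_unique (hT.congr' hev) tendsto_const_nhds


theorem cdot_sub_left {n : ℕ} (a b c : Fin n → ℂ) : cdot (a - b) c = cdot a c - cdot b c := by
  simp [cdot, sub_mul, Finset.sum_sub_distrib]
theorem cdot_sub_right {n : ℕ} (a b c : Fin n → ℂ) : cdot a (b - c) = cdot a b - cdot a c := by
  simp [cdot, mul_sub, Finset.sum_sub_distrib]
theorem cdot_zero_left {n : ℕ} (a : Fin n → ℂ) : cdot 0 a = 0 := by simp [cdot]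

theorem cdot_gram_zero {n : ℕ} (a b : Fin n → ℂ) (h : cdot a a * cdot b b = cdot a b * cdot b a)
    (k l : Fin n) : a k * b l = a l * b k := by
  have hc : cdot b b • a - cdot a b • b = 0 := by
    apply cdot_self_eq_zero
    simp only [cdot_sub_left, cdot_sub_right, cdot_smul_left, cdot_smul_right, cdot_conj]
    linear_combination (cdot b b) * h
  have hk := congrFun hc k
  have hl := congrFun hc l
  simp at hk hl
  by_cases hb : cdot b b = 0
  · rw [cdot_self_eq_zero hb]; simp
  · apply mul_left_cancel₀ hb
    linear_combination b l * hk - b k * hl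

theorem hasDerivAt_line {n : ℕ} {V : Type*} [NormedAddCommGroup V] [NormedSpace ℂ V]
    {U : Set (Fin n → ℂ)} (hU : IsOpen U) {F : (Fin n → ℂ) → V} (hF : DifferentiableOn ℂ F U)
    {z : Fin n → ℂ} (hz : z ∈ U) (u : Fin n → ℂ) :
    HasDerivAt (fun t : ℂ => F (z + t • u)) (fderiv ℂ F z u) 0 := by
  have h2 : HasDerivAt (fun ζ : ℂ => z + ζ • u) u 0 := by
    simpa using ((hasDerivAt_id (0:ℂ)).smul_const u).const_add z
  exact HasFDerivAt.comp_hasDerivAt (0:ℂ) (l := F) (f := fun ζ : ℂ => z + ζ • u)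
        (l' := fderiv ℂ F z)
        (by simpa using (hF.differentiableAt (hU.mem_nhds hz)).hasFDerivAt) h2

theorem hasDerivAt_cdot_line {n r m : ℕ}
    {U : Set (Fin n → ℂ)} (hU : IsOpen U) {F : (Fin n → ℂ) → Fin r → Fin m → ℂ}
    (hF : DifferentiableOn ℂ F U)
    {z : Fin n → ℂ} (hz : z ∈ U) (u : Fin n → ℂ) (i : Fin r) (b : Fin m → ℂ) :
    HasDerivAt (fun t : ℂ => cdot (F (z + t • u) i) b) (cdot (fderiv ℂ F z u i) b) 0 := by
  let ψ : (Fin r → Fin m → ℂ) →L[ℂ] ℂ :=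
    (LinearMap.toContinuousLinearMap (phi b)).comp (ContinuousLinearMap.proj i)
  exact ψ.hasFDerivAt.comp_hasDerivAt (0:ℂ) (hasDerivAt_line hU hF hz u)

theorem line_mem {n : ℕ} {U : Set (Fin n → ℂ)} (hU : IsOpen U)
    {z : Fin n → ℂ} (hz : z ∈ U) (u : Fin n → ℂ) : ∀ᶠ t in nhds (0:ℂ), z + t • u ∈ U := by
  have : Continuous (fun t : ℂ => z + t • u) := by fun_prop
  apply (this.tendsto 0).eventually
  simpa using hU.mem_nhds hz

theorem first_order {n r m : ℕ}
    {U : Set (Fin n → ℂ)} (hU : IsOpen U) {F : (Fin n → ℂ) → Fin r → Fin m → ℂ}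
    (hF : DifferentiableOn ℂ F U)
    (horth : ∀ z ∈ U, ∀ w ∈ U, cdot z w = 1 → ∀ i j, cdot (F z i) (F w j) = if i = j then 1 else 0)
    {z w : Fin n → ℂ} (hz : z ∈ U) (hw : w ∈ U) (hzw : cdot z w = 1) {u : Fin n → ℂ}
    (hu : cdot u w = 0) (i j : Fin r) : cdot (fderiv ℂ F z u i) (F w j) = 0 := by
  have h1 := hasDerivAt_cdot_line hU hF hz u i (F w j)
  have h2 : (fun t : ℂ => cdot (F (z + t • u) i) (F w j)) =ᶠ[nhds 0]
      fun _ => if i = j then 1 else 0 := by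
    filter_upwards [line_mem hU hz u] with t ht
    exact horth _ ht _ hw (by rw [cdot_add_left, cdot_smul_left, hu, hzw]; ring) i j
  exact h1.unique ((hasDerivAt_const (0:ℂ) _).congr_of_eventuallyEq h2)

theorem second_order {n r m : ℕ}
    {U : Set (Fin n → ℂ)} (hU : IsOpen U) {F : (Fin n → ℂ) → Fin r → Fin m → ℂ}
    (hF : DifferentiableOn ℂ F U)
    (horth : ∀ z ∈ U, ∀ w ∈ U, cdot z w = 1 → ∀ i j, cdot (F z i) (F w j) = if i = j then 1 else 0)
    {z : Fin n → ℂ} (hz : z ∈ U) (hzz : cdot z z = 1) {u u' : Fin n → ℂ}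
    (hu : cdot u z = 0) (hu' : cdot u' z = 0) (i j : Fin r) :
    cdot (fderiv ℂ F z u i) (fderiv ℂ F z u' j) =
      cdot u u' * cdot (fderiv ℂ F z z i) (F z j) := by
  set c := cdot u u' with hc
  have h1 := hasDerivAt_cdot_line hU hF hz u' j (fderiv ℂ F z u i)
  have h1' := hasDerivAt_cdot_line hU hF hz u' j (fderiv ℂ F z z i)
  have h3 := h1.sub (((hasDerivAt_id (0:ℂ)).mul_const ((starRingEnd ℂ) c)).mul h1')
  have h2 : (fun t : ℂ => cdot (F (z + t • u') j) (fderiv ℂ F z u i) -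
      (t * (starRingEnd ℂ) c) * cdot (F (z + t • u') j) (fderiv ℂ F z z i)) =ᶠ[nhds 0]
      fun _ => (0:ℂ) := by
    filter_upwards [line_mem hU hz u'] with t ht
    have hzu' := cdot_swap_zero hu'
    have h4 := first_order hU hF horth (z := z) (w := z + t • u') hz ht
      (by rw [cdot_add_right, cdot_smul_right, hzz, hzu']; ring)
      (u := u - ((starRingEnd ℂ) t * c) • z)
      (by
        simp only [cdot_sub_left, cdot_add_right, cdot_smul_left, cdot_smul_right, hzz, hzu', hu,
          ← hc]
        ring) i j
    have h5 := cdot_swap_zero h4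
    simp only [map_sub, map_smul, Pi.sub_apply, Pi.smul_apply, cdot_sub_right, cdot_smul_right,
      map_mul, Complex.conj_conj] at h5
    exact h5
  have h6 := h3.unique ((hasDerivAt_const (0:ℂ) (0:ℂ)).congr_of_eventuallyEq h2)
  simp only [id, zero_smul, add_zero, zero_mul, one_mul] at h6
  have h7 := congrArg (starRingEnd ℂ) h6
  simp only [map_sub, map_mul, cdot_conj, Complex.conj_conj, map_zero] at h7
  linear_combination h7

theorem rank_one {n r m : ℕ} (hcod : m + 2 < r + 2 * n)
    (A : (Fin n → ℂ) →ₗ[ℂ] (Fin r → Fin m → ℂ)) (F₀ : Fin r → Fin m → ℂ) (z : Fin n → ℂ)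
    (G : Fin r → Fin r → ℂ)
    (hFF : ∀ i j, cdot (F₀ i) (F₀ j) = if i = j then 1 else 0)
    (hAF : ∀ u, cdot u z = 0 → ∀ i j, cdot (A u i) (F₀ j) = 0)
    (hAA : ∀ u, cdot u z = 0 → ∀ u', cdot u' z = 0 → ∀ i j,
      cdot (A u i) (A u' j) = cdot u u' * G i j)
    {u : Fin n → ℂ} (hu : cdot u z = 0) (i j : Fin r) (k l : Fin m) :
    A u i k * A u j l = A u i l * A u j k := by
  by_contra hne
  have hdet : G i i * G j j - G i j * G j i ≠ 0 := by
    intro h0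
    apply hne
    apply cdot_gram_zero
    simp only [hAA u hu u hu]
    linear_combination (cdot u u)^2 * h0
  let K := LinearMap.ker (phi z)
  let L : (K × K) × (Fin r → ℂ) →ₗ[ℂ] (Fin m → ℂ) :=
    ((((LinearMap.proj i).comp A).comp K.subtype).coprod
      (((LinearMap.proj j).comp A).comp K.subtype)).coprod (Fintype.linearCombination ℂ F₀)
  have hL : ∀ u1 u2 v, L ((u1, u2), v) = A u1 i + A u2 j + ∑ q, v q • F₀ q := by
    intro u1 u2 v
    simp [L, Fintype.linearCombination_apply]
  have hinj : Function.Injective L := by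
    rw [← LinearMap.ker_eq_bot, LinearMap.ker_eq_bot']
    rintro ⟨⟨⟨u1, hu1⟩, ⟨u2, hu2⟩⟩, v⟩ h
    rw [hL] at h
    have hu1' : cdot u1 z = 0 := hu1
    have hu2' : cdot u2 z = 0 := hu2
    simp only at h
    have hv : v = 0 := by
      funext q
      have h1 := congrArg (phi (F₀ q)) h
      simp only [map_add, map_sum, map_smul, map_zero] at h1
      have e : ∀ x, phi (F₀ q) x = cdot x (F₀ q) := fun x => rfl
      simp only [e, hAF u1 hu1', hAF u2 hu2', hFF] at h1
      simpa using h1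
    subst hv
    simp only [Pi.zero_apply, zero_smul, Finset.sum_const_zero, add_zero] at h
    have hw : ∀ q, G i q • u1 + G j q • u2 = 0 := by
      intro q
      apply cdot_self_eq_zero
      have hwz : cdot (G i q • u1 + G j q • u2) z = 0 := by
        rw [cdot_add_left, cdot_smul_left, cdot_smul_left, hu1', hu2']; ring
      have h1 : cdot (A u1 i + A u2 j) (A (G i q • u1 + G j q • u2) q) = 0 := by
        rw [h, cdot_zero_left]
      rw [cdot_add_left, hAA u1 hu1' _ hwz, hAA u2 hu2' _ hwz] at h1
      rw [cdot_add_left (G i q • u1) (G j q • u2), cdot_smul_left, cdot_smul_left]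
      linear_combination h1
    have h1 : u1 = 0 := by
      have : (G i i * G j j - G i j * G j i) • u1 = G j j • (G i i • u1 + G j i • u2)
          - G j i • (G i j • u1 + G j j • u2) := by module
      rw [hw, hw] at this
      simpa [hdet] using this
    have h2 : u2 = 0 := by
      have : (G i i * G j j - G i j * G j i) • u2 = G i i • (G i j • u1 + G j j • u2)
          - G i j • (G i i • u1 + G j i • u2) := by module
      rw [hw, hw] at this
      simpa [hdet] using this
    subst h1 h2
    rfl
  have hle := LinearMap.finrank_le_finrank_of_injective hinj
  have hk := finrank_ker_phi z
  simp only [Module.finrank_prod, Module.finrank_fin_fun] at hle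
  change n ≤ Module.finrank ℂ K + 1 at hk
  omega

theorem col_line {n r m : ℕ}
    (A : (Fin n → ℂ) →ₗ[ℂ] (Fin r → Fin m → ℂ)) (F₀ : Fin r → Fin m → ℂ) (z : Fin n → ℂ)
    (hzz : cdot z z = 1)
    (hAA : ∀ u, cdot u z = 0 → ∀ u', cdot u' z = 0 → ∀ i j,
      cdot (A u i) (A u' j) = cdot u u' * cdot (A z i) (F₀ j))
    (hB : ∀ i j k l, A z i k * A z j l = A z i l * A z j k)
    (u : Fin n → ℂ) (i j : Fin r) (k l : Fin m) :
    A z j l * A u i k = A z i l * A u j k := by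
  have hp : ∀ e, cdot e z = 0 → A z j l * A e i k = A z i l * A e j k := by
    intro e he
    have hx : A z j l • A e i - A z i l • A e j = 0 := by
      have hperp : ∀ q, cdot (A z j l • A e i - A z i l • A e j) (A e q) = 0 := by
        intro q
        have h0 : A z j l • A z i - A z i l • A z j = 0 := by
          funext p
          simp
          linear_combination hB i j p l
        have h1 : cdot (A z j l • A z i - A z i l • A z j) (F₀ q) = 0 := by
          rw [h0, cdot_zero_left]
        rw [cdot_sub_left, cdot_smul_left, cdot_smul_left] at h1 ⊢
        rw [hAA e he e he, hAA e he e he]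
        linear_combination (cdot e e) * h1
      apply cdot_self_eq_zero
      rw [cdot_sub_right, cdot_smul_right, cdot_smul_right, hperp, hperp]
      ring
    have := congrFun hx k
    simp at this
    linear_combination this
  have hdec : u = cdot u z • z + (u - cdot u z • z) := by abel
  have hq := hp (u - cdot u z • z) (by rw [cdot_sub_left, cdot_smul_left, hzz]; ring)
  simp only [map_sub, map_smul, Pi.sub_apply, Pi.smul_apply, smul_eq_mul] at hq
  linear_combination hq + cdot u z * hB i j k l


theorem const_ratio {E V : Type*} [NormedAddCommGroup E] [NormedSpace ℂ E] [FiniteDimensional ℂ E]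
    [NormedAddCommGroup V] [NormedSpace ℂ V] [FiniteDimensional ℂ V]
    {W : Set E} (hW : IsOpen W) {f g : E → V} {lam : E → ℂ}
    (hf : DifferentiableOn ℂ f W) (hg : DifferentiableOn ℂ g W) (hl : DifferentiableOn ℂ lam W)
    (h : ∀ z ∈ W, fderiv ℂ f z = lam z • fderiv ℂ g z) {z : E} (hz : z ∈ W) (e1 e2 : E)
    (hind : ∀ a b : ℂ, a • fderiv ℂ g z e1 = b • fderiv ℂ g z e2 → a = 0 ∧ b = 0) :
    fderiv ℂ lam z = 0 := by
  have hn := hW.mem_nhds hz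
  have hf2 := ((aux_fderiv hW hf).differentiableAt hn).hasFDerivAt
  have hg2 := ((aux_fderiv hW hg).differentiableAt hn).hasFDerivAt
  have hl1 := (hl.differentiableAt hn).hasFDerivAt
  have hev : (fderiv ℂ f) =ᶠ[nhds z] fun y => lam y • fderiv ℂ g y := by
    filter_upwards [hn] with y hy using h y hy
  have heq := hf2.unique ((hl1.smul hg2).congr_of_eventuallyEq hev)
  have symf := fun v w => second_derivative_symmetric_of_eventually (x := z)
    (f' := fderiv ℂ f) (f := f)
    (by filter_upwards [hn] with y hy using (hf.differentiableAt (hW.mem_nhds hy)).hasFDerivAt)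
    hf2 v w
  have symg := fun v w => second_derivative_symmetric_of_eventually (x := z)
    (f' := fderiv ℂ g) (f := g)
    (by filter_upwards [hn] with y hy using (hg.differentiableAt (hW.mem_nhds hy)).hasFDerivAt)
    hg2 v w
  have key : ∀ u v, fderiv ℂ lam z u • fderiv ℂ g z v = fderiv ℂ lam z v • fderiv ℂ g z u := by
    intro u v
    have h1 := symf u v
    rw [heq] at h1
    simp only [ContinuousLinearMap.add_apply, ContinuousLinearMap.smul_apply,
      ContinuousLinearMap.smulRight_apply] at h1
    rw [symg u v] at h1
    exact add_left_cancel h1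
  have k1 := hind _ _ (key e2 e1)
  ext u
  have k2 := key u e1
  rw [k1.2, zero_smul] at k2
  have := (hind (fderiv ℂ lam z u) 0 (by rw [k2, zero_smul])).1
  simpa using this

theorem perp_decomp {n : ℕ} {z : Fin n → ℂ} (hzz : cdot z z = 1) (u : Fin n → ℂ) :
    ∃ e, cdot e z = 0 ∧ u = e + cdot u z • z :=
  ⟨u - cdot u z • z, by rw [cdot_sub_left, cdot_smul_left, hzz]; ring, by simp⟩

section
variable {n r m : ℕ} {U : Set (Fin n → ℂ)} {F : (Fin n → ℂ) → Fin r → Fin m → ℂ}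

theorem diff_entry (hU : IsOpen U) (hF : DifferentiableOn ℂ F U) (i : Fin r) (k : Fin m) :
    DifferentiableOn ℂ (fun q : (Fin n → ℂ) × (Fin n → ℂ) => fderiv ℂ F q.1 q.2 i k)
      (U ×ˢ Set.univ) := by
  have h1 := aux_fderiv hU hF
  have h2 : DifferentiableOn ℂ (fun q : (Fin n → ℂ) × (Fin n → ℂ) => fderiv ℂ F q.1 q.2)
      (U ×ˢ Set.univ) := by
    apply DifferentiableOn.clm_apply
    · exact h1.comp differentiableOn_fst (fun q hq => hq.1)
    · exact differentiableOn_snd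
  exact differentiableOn_pi.1 (differentiableOn_pi.1 h2 i) k

theorem diff_entry_const (hU : IsOpen U) (hF : DifferentiableOn ℂ F U) (u : Fin n → ℂ)
    (i : Fin r) (k : Fin m) : DifferentiableOn ℂ (fun z => fderiv ℂ F z u i k) U := 
  (diff_entry hU hF i k).comp (f := fun z => (z, u)) (by fun_prop) (fun z hz => ⟨hz, trivial⟩)

theorem diff_entry_self (hU : IsOpen U) (hF : DifferentiableOn ℂ F U)
    (i : Fin r) (k : Fin m) : DifferentiableOn ℂ (fun z => fderiv ℂ F z z i k) U := 
  (diff_entry hU hF i k).comp (f := fun z => (z, z)) (by fun_prop) (fun z hz => ⟨hz, trivial⟩)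

theorem step2 (hn : 2 ≤ n) (hcod : m + 2 < r + 2 * n) (hU : IsOpen U) (hc : IsPreconnected U)
    (hnull : ∃ z ∈ U, cdot z z = 1) (hF : DifferentiableOn ℂ F U)
    (horth : ∀ z ∈ U, ∀ w ∈ U, cdot z w = 1 → ∀ i j, cdot (F z i) (F w j) = if i = j then 1 else 0) :
    ∀ z ∈ U, ∀ u i j k l, fderiv ℂ F z z j l * fderiv ℂ F z u i k =
      fderiv ℂ F z z i l * fderiv ℂ F z u j k := by
  have hB : ∀ z ∈ U, cdot z z = 1 → ∀ i j k l,
      fderiv ℂ F z z i k * fderiv ℂ F z z j l = fderiv ℂ F z z i l * fderiv ℂ F z z j k := by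
    intro z hz hzz i j k l
    have := tangential_zero hn hU (p := fun q => fderiv ℂ F q.1 q.2 i k * fderiv ℂ F q.1 q.2 j l
      - fderiv ℂ F q.1 q.2 i l * fderiv ℂ F q.1 q.2 j k)
      (((diff_entry hU hF i k).mul (diff_entry hU hF j l)).sub
        ((diff_entry hU hF i l).mul (diff_entry hU hF j k)))
      (by
        intro z u t h
        simp only [map_smul, Pi.smul_apply, smul_eq_mul] at h ⊢
        linear_combination t ^ 2 * h)
      (by
        intro z hz hzz u hu
        have := rank_one hcod (fderiv ℂ F z : (Fin n → ℂ) →ₗ[ℂ] (Fin r → Fin m → ℂ)) (F z) z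
          (fun i j => cdot (fderiv ℂ F z z i) (F z j)) (horth z hz z hz hzz)
          (fun u hu i j => first_order hU hF horth hz hz hzz hu i j)
          (fun u hu u' hu' i j => second_order hU hF horth hz hzz hu hu' i j) hu i j k l
        exact sub_eq_zero.2 this) hz hzz
    exact sub_eq_zero.1 this
  intro z hz u i j k l
  rw [← sub_eq_zero]
  refine sphere_zero hn hU hc (h := fun z => fderiv ℂ F z z j l * fderiv ℂ F z u i k -
      fderiv ℂ F z z i l * fderiv ℂ F z u j k)
    (((diff_entry_self hU hF j l).mul (diff_entry_const hU hF u i k)).sub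
      ((diff_entry_self hU hF i l).mul (diff_entry_const hU hF u j k))) hnull ?_ z hz
  intro z hz hzz
  rw [sub_eq_zero]
  exact col_line (fderiv ℂ F z : (Fin n → ℂ) →ₗ[ℂ] (Fin r → Fin m → ℂ)) (F z) z hzz
    (fun u hu u' hu' i j => second_order hU hF horth hz hzz hu hu' i j)
    (hB z hz hzz) u i j k l

theorem step3 (hn : 2 ≤ n) (hU : IsOpen U) (hc : IsPreconnected U)
    (hnull : ∃ z ∈ U, cdot z z = 1) (hF : DifferentiableOn ℂ F U)
    (horth : ∀ z ∈ U, ∀ w ∈ U, cdot z w = 1 → ∀ i j, cdot (F z i) (F w j) = if i = j then 1 else 0)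
    (hnon : ∃ z ∈ U, ¬ ∀ i j, cdot (F z i) (F z j) = if i = j then 1 else 0) :
    ∃ z ∈ U, cdot z z = 1 ∧ ∃ j, cdot (fderiv ℂ F z z j) (F z j) ≠ 0 := by
  by_contra! hcon
  obtain ⟨z₁, hz₁, hne⟩ := hnon
  apply hne
  have hA : ∀ z ∈ U, cdot z z = 1 → ∀ u, cdot u z = 0 → fderiv ℂ F z u = 0 := by
    intro z hz hzz u hu
    ext1 i
    apply cdot_self_eq_zero
    rw [second_order hU hF horth hz hzz hu hu, hcon z hz hzz, mul_zero]
  have hfd : ∀ z ∈ U, fderiv ℂ F z = 0 := by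
    refine sphere_zero hn hU hc (aux_fderiv hU hF) hnull ?_
    intro z hz hzz
    have hB : fderiv ℂ F z z = 0 := by
      ext i k
      refine tangential_zero hn hU (p := fun q => fderiv ℂ F q.1 q.2 i k) (diff_entry hU hF i k)
        ?_ ?_ hz hzz
      · intro z u t h
        simp only [map_smul, Pi.smul_apply, smul_eq_mul] at h ⊢
        rw [h, mul_zero]
      · intro z hz hzz u hu
        simp only [hA z hz hzz u hu, Pi.zero_apply]
    ext1 u
    obtain ⟨e, he, hu⟩ := perp_decomp hzz u
    rw [hu, map_add, map_smul, hB, hA z hz hzz e he]; simp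
  obtain ⟨z₀, hz₀, hzz⟩ := hnull
  have : F z₁ = F z₀ := hU.is_const_of_fderiv_eq_zero hc hF hfd hz₁ hz₀
  rw [this]
  exact horth z₀ hz₀ z₀ hz₀ hzz

theorem fderiv_row (hU : IsOpen U) (hF : DifferentiableOn ℂ F U) {z : Fin n → ℂ} (hz : z ∈ U)
    (i : Fin r) : HasFDerivAt (fun z => F z i)
      ((ContinuousLinearMap.proj (R := ℂ) (φ := fun _ : Fin r => Fin m → ℂ) i).comp (fderiv ℂ F z)) z :=
  hasFDerivAt_pi'.1 (hF.differentiableAt (hU.mem_nhds hz)).hasFDerivAt i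

theorem step5 (hn : 2 ≤ n) (hU : IsOpen U) (hc : IsPreconnected U) (hF : DifferentiableOn ℂ F U)
    (horth : ∀ z ∈ U, ∀ w ∈ U, cdot z w = 1 → ∀ i j, cdot (F z i) (F w j) = if i = j then 1 else 0)
    (h2 : ∀ z ∈ U, ∀ u i j k l, fderiv ℂ F z z j l * fderiv ℂ F z u i k =
      fderiv ℂ F z z i l * fderiv ℂ F z u j k)
    {z₀ : Fin n → ℂ} (hz₀ : z₀ ∈ U) (hzz : cdot z₀ z₀ = 1) (j : Fin r)
    (hj : cdot (fderiv ℂ F z₀ z₀ j) (F z₀ j) ≠ 0) :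
    ∃ c : Fin r → ℂ, c j = 1 ∧ ∀ z ∈ U, ∀ w ∈ U, ∀ i, F z i - c i • F z j = F w i - c i • F w j := by
  obtain ⟨e, he, hez⟩ := exists_perp hn z₀
  have hl0 : ∃ l, fderiv ℂ F z₀ z₀ j l ≠ 0 := by
    by_contra! h
    apply hj
    rw [show fderiv ℂ F z₀ z₀ j = 0 from funext h, cdot_zero_left]
  obtain ⟨l₀, hl₀⟩ := hl0
  have hee : cdot (fderiv ℂ F z₀ e j) (fderiv ℂ F z₀ e j) ≠ 0 := by
    rw [second_order hU hF horth hz₀ hzz hez hez]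
    refine mul_ne_zero (fun h => he (cdot_self_eq_zero h)) hj
  have hminor : ∃ k l, fderiv ℂ F z₀ e j k * fderiv ℂ F z₀ z₀ j l -
      fderiv ℂ F z₀ e j l * fderiv ℂ F z₀ z₀ j k ≠ 0 := by
    by_contra! h
    have hx : ∀ k, fderiv ℂ F z₀ e j k * cdot (fderiv ℂ F z₀ z₀ j) (F z₀ j) =
        cdot (fderiv ℂ F z₀ e j) (F z₀ j) * fderiv ℂ F z₀ z₀ j k := by
      intro k
      simp only [cdot, Finset.mul_sum, Finset.sum_mul]
      refine Finset.sum_congr rfl fun l _ => ?_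
      linear_combination (starRingEnd ℂ) (F z₀ j l) * h k l
    rw [first_order hU hF horth hz₀ hz₀ hzz hez] at hx
    apply hee
    have : fderiv ℂ F z₀ e j = 0 := by
      ext k
      have := hx k
      rw [zero_mul] at this
      exact (mul_eq_zero.1 this).resolve_right hj
    rw [this, cdot_zero_left]
  obtain ⟨k, l, hkl⟩ := hminor
  have hn0 := hU.mem_nhds hz₀
  have hcont : ∀ᶠ z in nhds z₀, z ∈ U ∧ fderiv ℂ F z z j l₀ ≠ 0 ∧
      fderiv ℂ F z e j k * fderiv ℂ F z z₀ j l - fderiv ℂ F z e j l * fderiv ℂ F z z₀ j k ≠ 0 := by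
    refine Filter.Eventually.and hn0 (Filter.Eventually.and ?_ ?_)
    · exact ((diff_entry_self hU hF j l₀).continuousOn.continuousAt hn0).eventually_ne hl₀
    · exact ContinuousAt.eventually_ne (g := fun z => fderiv ℂ F z e j k * fderiv ℂ F z z₀ j l -
          fderiv ℂ F z e j l * fderiv ℂ F z z₀ j k) ((((diff_entry_const hU hF e j k).mul (diff_entry_const hU hF z₀ j l)).sub
        ((diff_entry_const hU hF e j l).mul
          (diff_entry_const hU hF z₀ j k))).continuousOn.continuousAt hn0) hkl
  obtain ⟨ε, hε, hball⟩ := Metric.eventually_nhds_iff_ball.1 hcont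
  set W := Metric.ball z₀ ε with hWdef
  have hWo : IsOpen W := Metric.isOpen_ball
  have hWU : W ⊆ U := fun z hz => (hball z hz).1
  have hrow : ∀ i, DifferentiableOn ℂ (fun z => F z i) U := fun i => differentiableOn_pi.1 hF i
  have hfr : ∀ i, ∀ z ∈ U, ∀ u, fderiv ℂ (fun z => F z i) z u = fderiv ℂ F z u i := by
    intro i z hz u
    rw [(fderiv_row hU hF hz i).fderiv]; rfl
  let lam : Fin r → (Fin n → ℂ) → ℂ := fun i z => fderiv ℂ F z z i l₀ * (fderiv ℂ F z z j l₀)⁻¹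
  have hlamd : ∀ i, DifferentiableOn ℂ (lam i) W := fun i =>
    DifferentiableOn.fun_mul ((diff_entry_self hU hF i l₀).mono hWU)
      (DifferentiableOn.fun_inv ((diff_entry_self hU hF j l₀).mono hWU)
        (fun z hz => (hball z hz).2.1))
  have hrat : ∀ i, ∀ z ∈ W, fderiv ℂ (fun z => F z i) z = lam i z • fderiv ℂ (fun z => F z j) z := by
    intro i z hz
    ext u q
    rw [ContinuousLinearMap.smul_apply, Pi.smul_apply, hfr i z (hWU hz), hfr j z (hWU hz)]
    have h1 := h2 z (hWU hz) u i j q l₀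
    have h3 := (hball z hz).2.1
    simp only [lam, smul_eq_mul]
    field_simp
    linear_combination h1
  have hlam0 : ∀ i, ∀ z ∈ W, fderiv ℂ (lam i) z = 0 := by
    intro i z hz
    refine const_ratio hWo ((hrow i).mono hWU) ((hrow j).mono hWU) (hlamd i) (hrat i) hz e z₀ ?_
    intro a b hab
    rw [hfr j z (hWU hz), hfr j z (hWU hz)] at hab
    have h3 := (hball z hz).2.2
    have hk := congrFun hab k
    have hl := congrFun hab l
    simp only [Pi.smul_apply, smul_eq_mul] at hk hl
    constructor
    · refine (mul_eq_zero.1 (?_ : a * _ = 0)).resolve_right h3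
      linear_combination fderiv ℂ F z z₀ j l * hk - fderiv ℂ F z z₀ j k * hl
    · refine (mul_eq_zero.1 (?_ : b * _ = 0)).resolve_right h3
      linear_combination fderiv ℂ F z e j l * hk - fderiv ℂ F z e j k * hl
  have hz₀W : z₀ ∈ W := Metric.mem_ball_self hε
  refine ⟨fun i => lam i z₀, mul_inv_cancel₀ hl₀, ?_⟩
  intro z hz w hw i
  have hdiff : DifferentiableOn ℂ (fun z => F z i - lam i z₀ • F z j) U :=
    (hrow i).sub (DifferentiableOn.fun_const_smul (hrow j) _)
  have hzero : ∀ z ∈ U, fderiv ℂ (fun z => F z i - lam i z₀ • F z j) z = 0 := by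
    refine identity_multi hU hc (aux_fderiv hU hdiff) hWo ⟨z₀, hz₀W⟩ hWU ?_
    intro z hz
    have hcst : lam i z = lam i z₀ :=
      hWo.is_const_of_fderiv_eq_zero (convex_ball z₀ ε).isPreconnected (hlamd i) (hlam0 i) hz hz₀W
    have d1 := ((hrow i).differentiableAt (hU.mem_nhds (hWU hz))).hasFDerivAt
    have d2 := ((hrow j).differentiableAt (hU.mem_nhds (hWU hz))).hasFDerivAt
    refine (d1.sub (d2.const_smul (lam i z₀))).fderiv.trans ?_
    rw [hrat i z hz, hcst, sub_self]
  exact hU.is_const_of_fderiv_eq_zero hc hdiff hzero hz hw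
end

theorem step6 {r m : ℕ} {X : Type*} (U : Set X) (F : X → Fin r → Fin m → ℂ) (z₀ : X) 
    (hFF : ∀ i j, cdot (F z₀ i) (F z₀ j) = if i = j then 1 else 0) (hz₀ : z₀ ∈ U)
    (c : Fin r → ℂ) (j : Fin r) (hcj : c j = 1)
    (hc : ∀ z ∈ U, ∀ w ∈ U, ∀ i, F z i - c i • F z j = F w i - c i • F w j) :
    ∃ N : Submodule ℂ (Fin (r + m) → ℂ),
      Module.finrank ℂ ↥N = r - 1 ∧
      (∀ u ∈ N, ∀ v ∈ N, iip r m u v = 0) ∧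
      ∀ z ∈ U, N ≤ rowSpan (chartMat r m (Matrix.of (F z))) := by
  have hL : ∀ (z : X) (v : Fin r → ℂ) (i : Fin r),
      (v ᵥ* chartMat r m (Matrix.of (F z))) (Fin.castAdd m i) = v i := by
    intro z v i
    simp [Matrix.vecMul, dotProduct, chartMat, ← Fin.ext_iff]
  have hR : ∀ (z : X) (v : Fin r → ℂ) (k : Fin m),
      (v ᵥ* chartMat r m (Matrix.of (F z))) (Fin.natAdd r k) = ∑ i, v i * F z i k := by
    intro z v i
    simp [Matrix.vecMul, dotProduct, chartMat]
  let ℓ : (Fin r → ℂ) →ₗ[ℂ] ℂ := Fintype.linearCombination ℂ c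
  have hℓ : ∀ v, ℓ v = ∑ i, v i * c i := fun v => by
    simp [ℓ, Fintype.linearCombination_apply]
  let T := Matrix.vecMulLinear (chartMat r m (Matrix.of (F z₀)))
  have hTinj : Function.Injective T := by
    intro v w h
    ext i
    have := congrFun h (Fin.castAdd m i)
    rwa [Matrix.vecMulLinear_apply, Matrix.vecMulLinear_apply, hL, hL] at this
  have hsur : LinearMap.range ℓ = ⊤ := by
    rw [LinearMap.range_eq_top]
    intro t
    refine ⟨Pi.single j t, ?_⟩
    rw [hℓ]; simp [Pi.single_apply, hcj]
  refine ⟨(LinearMap.ker ℓ).map T, ?_, ?_, ?_⟩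
  · rw [← (Submodule.equivMapOfInjective T hTinj (LinearMap.ker ℓ)).finrank_eq]
    have := LinearMap.finrank_range_add_finrank_ker ℓ
    rw [hsur] at this
    simp at this
    omega
  · rintro _ ⟨v, hv, rfl⟩ _ ⟨w, hw, rfl⟩
    have hcd : ∑ k : Fin m, (∑ i, v i * F z₀ i k) * (starRingEnd ℂ) (∑ i, w i * F z₀ i k)
        = ∑ i, v i * (starRingEnd ℂ) (w i) := by
      have : ∀ i i', ∑ k, F z₀ i k * (starRingEnd ℂ) (F z₀ i' k) = if i = i' then 1 else 0 := hFF
      calc _ = ∑ k : Fin m, ∑ i, ∑ i', v i * (starRingEnd ℂ) (w i') *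
              (F z₀ i k * (starRingEnd ℂ) (F z₀ i' k)) := by
            refine Finset.sum_congr rfl fun k _ => ?_
            rw [map_sum, Finset.sum_mul_sum]
            refine Finset.sum_congr rfl fun i _ => Finset.sum_congr rfl fun i' _ => ?_
            rw [map_mul]; ring
        _ = ∑ i, ∑ i', v i * (starRingEnd ℂ) (w i') *
              ∑ k, (F z₀ i k * (starRingEnd ℂ) (F z₀ i' k)) := by
            rw [Finset.sum_comm]
            refine Finset.sum_congr rfl fun i _ => ?_
            rw [Finset.sum_comm]
            refine Finset.sum_congr rfl fun i' _ => ?_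
            rw [Finset.mul_sum]
        _ = _ := by simp [this]
    rw [iip, Fin.sum_univ_add]
    simp only [T, Matrix.vecMulLinear_apply, hL, hR]
    simp only [Fin.val_castAdd, Fin.is_lt, if_true, Fin.val_natAdd, one_mul, not_lt,
      Nat.le_add_right, if_neg, neg_mul, Finset.sum_neg_distrib]
    have : ∀ x : Fin m, ¬ (r + (x:ℕ) < r) := fun x => by omega
    try simp only [this, if_false, neg_mul, one_mul, Finset.sum_neg_distrib]
    rw [hcd]; ring
  · rintro z hz _ ⟨v, hv, rfl⟩
    have hv' : ∑ i, v i * c i = 0 := by rw [← hℓ]; exact hv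
    have heq : T v = v ᵥ* chartMat r m (Matrix.of (F z)) := by
      ext q
      refine Fin.addCases (fun i => ?_) (fun k => ?_) q
      · simp only [T, Matrix.vecMulLinear_apply, hL]
      · simp only [T, Matrix.vecMulLinear_apply, hR]
        have hx : ∀ z, ∑ i, v i * F z i k = ∑ i, v i * (F z i - c i • F z j) k := by
          intro z
          simp only [Pi.sub_apply, Pi.smul_apply, smul_eq_mul, mul_sub, Finset.sum_sub_distrib,
            ← mul_assoc, ← Finset.sum_mul, hv', zero_mul, sub_zero]
        rw [hx, hx]
        refine Finset.sum_congr rfl fun i _ => ?_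
        rw [hc z₀ hz₀ z hz i]
    rw [heq, rowSpan, Matrix.vecMul_eq_sum]
    exact Submodule.sum_mem _ fun i _ => Submodule.smul_mem _ _ (Submodule.subset_span ⟨i, rfl⟩)

/-- Let `s ≥ 2`, `2 ≤ r' ≤ s'` with `s' − r' < 2(s − 1)`, and let `F` be
a non-null local orthogonal map in chart form from `𝒢(1,s)` to `𝒢(r',s')`.  Then there
exists an `(r'−1)`-dimensional ℂ-linear subspace `N ⊆ ℂ^{r'+s'}`, totally isotropic for
`⟨·,·⟩_{r',s'}`, with `N ⊆ rowSpan([I_{r'} | F(z)])` for every `z ∈ U`. -/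
theorem common_null_subspace_of_nonnull_orthogonal_map
    (s r' s' : ℕ) (hs : 2 ≤ s) (hr' : 2 ≤ r') (hr's' : r' ≤ s')
    (hcodim : (s' : ℤ) - (r' : ℤ) < 2 * ((s : ℤ) - 1))
    (U : Set (Fin s → ℂ)) (hopen : IsOpen U) (hconn : IsPreconnected U)
    (hnull : ∃ z ∈ U, cdot z z = 1)
    (F : (Fin s → ℂ) → Fin r' → Fin s' → ℂ)
    (hF : DifferentiableOn ℂ F U)
    (horth : ∀ z ∈ U, ∀ w ∈ U, cdot z w = 1 →
      Matrix.of (F z) * (Matrix.of (F w))ᴴ = (1 : Matrix (Fin r') (Fin r') ℂ))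
    (hnonnull : ∃ z₁ ∈ U,
      Matrix.of (F z₁) * (Matrix.of (F z₁))ᴴ ≠ (1 : Matrix (Fin r') (Fin r') ℂ)) :
    ∃ N : Submodule ℂ (Fin (r' + s') → ℂ),
      Module.finrank ℂ ↥N = r' - 1 ∧
      (∀ u ∈ N, ∀ v ∈ N, iip r' s' u v = 0) ∧
      ∀ z ∈ U, N ≤ rowSpan (chartMat r' s' (Matrix.of (F z))) := by
  have hent : ∀ z w i j, (Matrix.of (F z) * (Matrix.of (F w))ᴴ) i j = cdot (F z i) (F w j) := by
    intro z w i j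
    simp [Matrix.mul_apply, cdot]
  have horth' : ∀ z ∈ U, ∀ w ∈ U, cdot z w = 1 →
      ∀ i j, cdot (F z i) (F w j) = if i = j then 1 else 0 := by
    intro z hz w hw h i j
    rw [← hent, horth z hz w hw h, Matrix.one_apply]
  have hnon : ∃ z ∈ U, ¬ ∀ i j, cdot (F z i) (F z j) = if i = j then 1 else 0 := by
    obtain ⟨z, hz, h⟩ := hnonnull
    refine ⟨z, hz, fun h' => h ?_⟩
    ext i j
    rw [hent, h', Matrix.one_apply]
  have h2 := step2 hs (by omega : s' + 2 < r' + 2 * s) hopen hconn hnull hF horth'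
  obtain ⟨z₀, hz₀, hzz, j, hj⟩ := step3 hs hopen hconn hnull hF horth' hnon
  obtain ⟨c, hcj, hc⟩ := step5 hs hopen hconn hF horth' h2 hz₀ hzz j hj
  exact step6 U F z₀ (horth' z₀ hz₀ z₀ hz₀ hzz) hz₀ c j hcj hc
end
end

section
/- Let s ≥ 2 and r' ≥ 2 be integers. Define the generalized Whitney map f : ℂ^s → ℂ^{r'×(r'+2s−2)} as follows: the first row of f(z) is (z₁, …, z_{s−1}, z₁z_s, z₂z_s, …, z_s², 0, …, 0), i.e. its first s−1 entries are z₁,…,z_{s−1}, its next s entries are z₁z_s,…,z_sz_s, and its last r'−1 entries are 0; for 2 ≤ i ≤ r', the i-th row of f(z) has a 1 in column (2s−1)+(i−1) and 0 in all other columns. Then f maps the unit sphere into the Shilov boundary S(Ω_{r', r'+2s−2}): whenever ∑_{i=1}^s |z_i|² = 1, one has f(z)·f(z)ᴴ = I_{r'}. (Here s' − r' = 2s − 2, showing the bound s' − r' < 2s − 2 in the rigidity theorem is sharp.) -/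
open scoped BigOperators
open Matrix

noncomputable section

/-- The generalized Whitney map `f : ℂ^s → ℂ^{r'×(r'+2s−2)}`: the first row of `f(z)` is
`(z₁, …, z_{s−1}, z₁z_s, z₂z_s, …, z_s², 0, …, 0)` (first `s−1` entries `z₁,…,z_{s−1}`,
next `s` entries `z₁z_s,…,z_sz_s`, last `r'−1` entries `0`), and for `2 ≤ i ≤ r'` the
`i`-th row has a `1` in column `(2s−1)+(i−1)` and `0` elsewhere. -/
def whitney (s r' : ℕ) (hs : 1 ≤ s) (z : Fin s → ℂ) :
    Matrix (Fin r') (Fin (r' + (2 * s - 2))) ℂ :=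
  Matrix.of fun i j =>
    if (i : ℕ) = 0 then
      if h1 : (j : ℕ) < s - 1 then z ⟨(j : ℕ), by omega⟩
      else if h2 : (j : ℕ) < 2 * s - 1 then
        z ⟨(j : ℕ) - (s - 1), by omega⟩ * z ⟨s - 1, by omega⟩
      else 0
    else if (j : ℕ) = 2 * s - 2 + (i : ℕ) then 1 else 0

/-- Let `s ≥ 2` and `r' ≥ 2`.  The generalized Whitney map sends the
unit sphere `{z : ∑ |z_i|² = 1}` into the Shilov boundary `S(Ω_{r',r'+2s−2})`:
`f(z)·f(z)ᴴ = I_{r'}`.  (Here `s' − r' = 2s − 2`, showing the bound `s' − r' < 2s − 2`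
in the rigidity theorem is sharp.) -/
theorem whitney_maps_sphere_to_shilov
    (s r' : ℕ) (hs : 2 ≤ s) (hr' : 2 ≤ r')
    (z : Fin s → ℂ) (hz : ∑ i, Complex.normSq (z i) = 1) :
    whitney s r' (by omega) z * (whitney s r' (by omega) z)ᴴ =
      (1 : Matrix (Fin r') (Fin r') ℂ) := by
  obtain ⟨m, rfl⟩ : ∃ m, s = m + 1 := ⟨s - 1, by omega⟩
  obtain ⟨k, rfl⟩ : ∃ k, r' = k + 1 := ⟨r' - 1, by omega⟩
  ext a b
  rw [Matrix.mul_apply]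
  simp only [Matrix.conjTranspose_apply]
  by_cases ha : (a : ℕ) = 0
  · by_cases hb : (b : ℕ) = 0
    · have hab : a = b := Fin.ext (by omega)
      subst hab
      rw [Matrix.one_apply_eq]
      let w : ℕ → ℂ := fun n => if h : n < m + 1 then z ⟨n, h⟩ else 0
      let g : ℕ → ℂ := fun j =>
        if j < m then w j else if j < 2 * m + 1 then w (j - m) * w m else 0
      have hg : ∀ j : Fin (k + 1 + (2 * (m + 1) - 2)),
          whitney (m + 1) (k + 1) (by omega) z a j = g j := by
        intro j
        simp only [whitney, Matrix.of_apply, ha, if_true, g, w, Nat.add_sub_cancel]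
        split_ifs <;> first | rfl | omega
      have hw : ∑ n ∈ Finset.range (m + 1), w n * star (w n) = 1 := by
        rw [← Fin.sum_univ_eq_sum_range (fun n => w n * star (w n))]
        have : ((∑ i, Complex.normSq (z i) : ℝ) : ℂ) = 1 := by rw [hz]; simp
        rw [← this, Complex.ofReal_sum]
        refine Finset.sum_congr rfl fun i _ => ?_
        have : w i = z i := dif_pos i.isLt
        rw [this]
        exact Complex.mul_conj (z i)
      simp only [hg]
      rw [Fin.sum_univ_eq_sum_range (fun n => g n * star (g n))]
      have hN : k + 1 + (2 * (m + 1) - 2) = m + (m + 1) + k := by omega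
      rw [hN, Finset.sum_range_add, Finset.sum_range_add]
      have h1 : ∑ x ∈ Finset.range m, g x * star (g x)
          = ∑ x ∈ Finset.range m, w x * star (w x) := by
        refine Finset.sum_congr rfl fun x hx => ?_
        have hx := Finset.mem_range.1 hx
        have : g x = w x := by simp [g, hx]
        rw [this]
      have h2 : ∑ x ∈ Finset.range (m + 1), g (m + x) * star (g (m + x))
          = w m * star (w m) := by
        rw [← one_mul (w m * star (w m)), ← hw, Finset.sum_mul]
        refine Finset.sum_congr rfl fun x hx => ?_
        have hx := Finset.mem_range.1 hx
        have : g (m + x) = w x * w m := by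
          simp only [g]
          rw [if_neg (by omega), if_pos (by omega), Nat.add_sub_cancel_left]
        rw [this, star_mul]
        ring
      have h3 : ∑ x ∈ Finset.range k, g (m + (m + 1) + x) * star (g (m + (m + 1) + x)) = 0 := by
        refine Finset.sum_eq_zero fun x _ => ?_
        have : g (m + (m + 1) + x) = 0 := by
          simp only [g]
          rw [if_neg (by omega), if_neg (by omega)]
        rw [this, zero_mul]
      rw [h1, h2, h3, add_zero, ← Finset.sum_range_succ (fun x => w x * star (w x)), hw]
    · have hab : a ≠ b := fun h => hb (h ▸ ha)
      rw [Matrix.one_apply_ne hab]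
      refine Finset.sum_eq_zero fun j _ => ?_
      simp only [whitney, Matrix.of_apply, ha, hb, if_true, if_false]
      split_ifs <;> first | omega | simp
  · by_cases hb : (b : ℕ) = 0
    · have hab : a ≠ b := fun h => ha (h ▸ hb)
      rw [Matrix.one_apply_ne hab]
      refine Finset.sum_eq_zero fun j _ => ?_
      simp only [whitney, Matrix.of_apply, ha, hb, if_true, if_false]
      split_ifs <;> first | omega | simp
    · by_cases hab : a = b
      · subst hab
        rw [Matrix.one_apply_eq]
        rw [Finset.sum_eq_single (⟨2 * (m + 1) - 2 + a, by omega⟩ : Fin _)]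
        · simp only [whitney, Matrix.of_apply, ha, if_false, if_true, star_one, mul_one]
        · intro j _ hj
          have hj' : (j : ℕ) ≠ 2 * (m + 1) - 2 + a := fun h => hj (Fin.ext h)
          simp only [whitney, Matrix.of_apply, ha, if_false, hj', zero_mul]
        · simp
      · rw [Matrix.one_apply_ne hab]
        have hab' : (a : ℕ) ≠ b := fun h => hab (Fin.ext h)
        refine Finset.sum_eq_zero fun j _ => ?_
        simp only [whitney, Matrix.of_apply, ha, hb, if_false]
        split_ifs <;> first | omega | simp
end
end

section
/- Let E be a finite-dimensional vector space over ℂ, let m ≥ 1 and d, k ≥ 0 be integers, and let V₁, …, V_m be subspaces of E with dim V_i = d for every i, such that dim(V_i ∩ ∑_{j≠i} V_j) ≤ k for every i. Then dim(∑_{i=1}^m V_i) ≥ m(d − k) + k. -/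
open scoped BigOperators

noncomputable section

/-- Let `E` be a finite-dimensional ℂ-vector space, `m ≥ 1`,
`d, k ≥ 0`, and `V₁, …, V_m` subspaces of `E` with `dim V_i = d` for all `i` and
`dim(V_i ∩ ∑_{j≠i} V_j) ≤ k` for all `i`.  Then `dim(∑ V_i) ≥ m(d − k) + k`. -/
theorem dim_sum_lower_bound
    (E : Type*) [AddCommGroup E] [Module ℂ E] [FiniteDimensional ℂ E]
    (m : ℕ) (hm : 1 ≤ m) (d k : ℕ)
    (V : Fin m → Submodule ℂ E)
    (hd : ∀ i, Module.finrank ℂ ↥(V i) = d)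
    (hk : ∀ i, Module.finrank ℂ ↥(V i ⊓ ⨆ j, ⨆ (_ : j ≠ i), V j) ≤ k) :
    (m : ℤ) * ((d : ℤ) - (k : ℤ)) + (k : ℤ) ≤ (Module.finrank ℂ ↥(⨆ i, V i) : ℤ) := by
  have key : ∀ s : Finset (Fin m), s.Nonempty →
      (s.card : ℤ) * ((d : ℤ) - (k : ℤ)) + (k : ℤ) ≤ (Module.finrank ℂ ↥(s.sup V) : ℤ) := by
    intro s hs
    induction hs using Finset.Nonempty.cons_induction with
    | singleton a => rw [Finset.sup_singleton, hd a]; simp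
    | cons a s ha hs ih =>
      rw [Finset.card_cons, Finset.sup_cons]
      have h1 := Submodule.finrank_sup_add_finrank_inf_eq (V a) (s.sup V)
      have hle : s.sup V ≤ ⨆ j, ⨆ (_ : j ≠ a), V j := by
        refine Finset.sup_le fun j hj => ?_
        exact le_iSup₂_of_le j (fun h => ha (h ▸ hj)) le_rfl
      have h2 := (Submodule.finrank_mono (inf_le_inf_left (V a) hle)).trans (hk a)
      rw [hd a] at h1
      push_cast
      zify at h1 h2
      linarith
  have h := key Finset.univ ⟨⟨0, hm⟩, Finset.mem_univ _⟩
  rw [Finset.sup_univ_eq_iSup, Finset.card_univ, Fintype.card_fin] at h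
  exact h
end
end
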